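/- Let ζ ∈ (-1/2, ∞) and α ∈ (0,2). Define F(r,s) := 1 if rs < 1 and (r-s)² < 1; F(r,s) := (rs)^{-ζ} if (r-s)² < 1 < rs; F(r,s) := |r-s|^{-(2ζ+1+α)} if rs < 1 < (r-s)², or if rs > 1, (r-s)² > 1 and rs < (r-s)²; F(r,s) := (rs)^{-ζ}|r-s|^{-(1+α)} if rs > 1, (r-s)² > 1 and rs > (r-s)². Then there exist constants c, C > 0 (depending only on ζ and α) such that for all r, s > 0: c · F(r,s) ≤ p_ζ^{(α)}(1,r,s) ≤ C · F(r,s). -/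

import Mathlib

open MeasureTheory Real Set Filter

/-- Modified Bessel function of the first kind of order `ν`. -/
noncomputable def besselI (ν x : ℝ) : ℝ :=
  ∑' k : ℕ, (x / 2) ^ (2 * (k : ℝ) + ν) / ((Nat.factorial k : ℝ) * Real.Gamma ((k : ℝ) + ν + 1))

/-- The Bessel heat kernel `p_ζ^{(2)}(t,r,s)`. -/
noncomputable def besselHeat (ζ t r s : ℝ) : ℝ :=
  (r * s) ^ ((1 : ℝ) / 2 - ζ) / (2 * t) * Real.exp (-(r ^ 2 + s ^ 2) / (4 * t)) *
    besselI (ζ - 1 / 2) (r * s / (2 * t))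

/-- `σ` is a family of `α/2`-stable subordinator densities. -/
def IsStableSubordinatorDensity (α : ℝ) (σ : ℝ → ℝ → ℝ) : Prop :=
  (∀ t, 0 < t → ∀ τ, 0 < τ → 0 ≤ σ t τ) ∧
  (∀ t, 0 < t → Measurable (σ t)) ∧
  (∀ t l : ℝ, 0 < t → 0 ≤ l →
    (∫ τ in Ioi (0 : ℝ), Real.exp (-τ * l) * σ t τ) = Real.exp (-t * l ^ (α / 2)))

/-- The `α/2`-subordinated Bessel heat kernel `p_ζ^{(α)}(t,r,s)`. -/
noncomputable def subKernel (ζ : ℝ) (σ : ℝ → ℝ → ℝ) (t r s : ℝ) : ℝ :=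
  ∫ τ in Ioi (0 : ℝ), besselHeat ζ τ r s * σ t τ

/-! ### Gamma quotients -/

theorem prod_add_mul_Gamma {s : ℝ} (hs : 0 < s) (n : ℕ) :
    (∏ j ∈ Finset.range n, (s + j)) * Real.Gamma s = Real.Gamma (n + s) := by
  induction n with
  | zero => simp
  | succ n ih =>
    rw [Finset.prod_range_succ, mul_right_comm, ih, mul_comm]
    have h : (n : ℝ) + s ≠ 0 := by positivity
    rw [add_comm s, ← Real.Gamma_add_one h]
    congr 1
    push_cast
    ring

theorem exists_bounds_of_tendsto_one {u : ℕ → ℝ} (hu : ∀ n, 0 < u n)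
    (h : Tendsto u atTop (nhds 1)) : ∃ c C : ℝ, 0 < c ∧ 0 < C ∧ ∀ n, c ≤ u n ∧ u n ≤ C := by
  obtain ⟨C, hC⟩ := h.bddAbove_range
  obtain ⟨D, hD⟩ := (h.inv₀ one_ne_zero).bddAbove_range
  have hC' : ∀ n, u n ≤ C := fun n => hC ⟨n, rfl⟩
  have hD' : ∀ n, (u n)⁻¹ ≤ D := fun n => hD ⟨n, rfl⟩
  have hD0 : 0 < D := lt_of_lt_of_le (inv_pos.2 (hu 0)) (hD' 0)
  exact ⟨D⁻¹, C, inv_pos.2 hD0, (hu 0).trans_le (hC' 0),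
    fun n => ⟨inv_le_of_inv_le₀ (hu n) (hD' n), hC' n⟩⟩

theorem exists_Gamma_quotient_bounds {s : ℝ} (hs : 0 < s) :
    ∃ c C : ℝ, 0 < c ∧ 0 < C ∧ ∀ k : ℕ,
      c ≤ Real.Gamma (k + s) / (Real.Gamma (k + 1 / 2) * ((k : ℝ) + 1) ^ (s - 1 / 2)) ∧
      Real.Gamma (k + s) / (Real.Gamma (k + 1 / 2) * ((k : ℝ) + 1) ^ (s - 1 / 2)) ≤ C := by
  refine exists_bounds_of_tendsto_one (fun n => ?_) ?_
  · have h1 : 0 < Real.Gamma (n + s) := Real.Gamma_pos_of_pos (by positivity)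
    have h2 : 0 < Real.Gamma ((n : ℝ) + 1 / 2) := Real.Gamma_pos_of_pos (by positivity)
    positivity
  · rw [← tendsto_add_atTop_iff_nat 1]
    have hΓ : Real.Gamma s ≠ 0 := (Real.Gamma_pos_of_pos hs).ne'
    have hΓ' : Real.Gamma (1 / 2) ≠ 0 := (Real.Gamma_pos_of_pos (by norm_num)).ne'
    have hlim : Tendsto (fun n : ℕ => (n : ℝ) / ((n : ℝ) + 2)) atTop (nhds 1) :=
      tendsto_natCast_div_add_atTop 2
    have h := (((Real.GammaSeq_tendsto_Gamma (1 / 2)).div (Real.GammaSeq_tendsto_Gamma s) hΓ).mul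
      (hlim.rpow_const (p := s - 1 / 2) (Or.inl one_ne_zero))).mul_const
      (Real.Gamma s / Real.Gamma (1 / 2))
    have h1 : Real.Gamma (1 / 2) / Real.Gamma s * 1 ^ (s - 1 / 2) *
        (Real.Gamma s / Real.Gamma (1 / 2)) = 1 := by
      rw [Real.one_rpow]; field_simp
    rw [h1] at h
    refine h.congr' ?_
    filter_upwards [eventually_gt_atTop 0] with n hn
    have hn' : (0 : ℝ) < n := by exact_mod_cast hn
    have hp : (((n + 1 : ℕ) : ℝ) + 1) = n + 2 := by push_cast; ring
    rw [← prod_add_mul_Gamma hs, ← prod_add_mul_Gamma (by norm_num : (0 : ℝ) < 1 / 2), hp,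
      Real.div_rpow hn'.le (by positivity), Real.rpow_sub hn']
    simp only [Pi.div_apply, Real.GammaSeq]
    have hp1 : (∏ j ∈ Finset.range (n + 1), (s + (j : ℝ))) ≠ 0 :=
      Finset.prod_ne_zero_iff.2 fun j _ => by positivity
    have hp2 : (∏ j ∈ Finset.range (n + 1), ((1 : ℝ) / 2 + (j : ℝ))) ≠ 0 :=
      Finset.prod_ne_zero_iff.2 fun j _ => by positivity
    have hf : (n.factorial : ℝ) ≠ 0 := by positivity
    have e1 : (n : ℝ) ^ s ≠ 0 := by positivity
    have e2 : (n : ℝ) ^ ((1 : ℝ) / 2) ≠ 0 := by positivity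
    have e3 : ((n : ℝ) + 2) ^ (s - 1 / 2) ≠ 0 := by positivity
    field_simp

/-! ### Power moments of the coefficients of `cosh` -/

theorem hasSum_two_mul_mul_cosh_coeff (x : ℝ) :
    HasSum (fun k : ℕ => x ^ (2 * k) / ((2 * k).factorial : ℝ) * (2 * k)) (x * Real.sinh x) := by
  have e : (fun k : ℕ => x ^ (2 * (k + 1)) / ((2 * (k + 1)).factorial : ℝ) *
      (2 * ((k + 1 : ℕ) : ℝ))) =
      fun k : ℕ => x * (x ^ (2 * k + 1) / ((2 * k + 1).factorial : ℝ)) := by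
    funext k
    rw [show 2 * (k + 1) = 2 * k + 1 + 1 by ring, Nat.factorial_succ, pow_succ]
    push_cast
    field_simp
    ring
  rw [← hasSum_nat_add_iff' 1, e]
  simpa using (Real.hasSum_sinh x).mul_left x

theorem cosh_coeff_mul_le {x : ℝ} (hx : 0 < x) (m k : ℕ) :
    x ^ (2 * k) / ((2 * k).factorial : ℝ) * ((1 + x) / (k + 1)) ^ m ≤
      2 ^ m * (x ^ (2 * k) / ((2 * k).factorial : ℝ) +
        (m + 2) ^ m * (x ^ (2 * k + m) / ((2 * k + m).factorial : ℝ))) := by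
  have hfac : ((2 * k + m).factorial : ℝ) ≤ (2 * k).factorial * ((m + 2) * (k + 1)) ^ m := by
    have h := Nat.mul_le_mul_left (2 * k).factorial (Nat.ascFactorial_le_pow_add (2 * k) m)
    rw [Nat.factorial_mul_ascFactorial] at h
    have h2 : 2 * k + m ≤ (m + 2) * (k + 1) := by nlinarith
    exact_mod_cast h.trans (Nat.mul_le_mul_left _ (Nat.pow_le_pow_left h2 m))
  have hA : (0 : ℝ) < (2 * k).factorial := by positivity
  have hB : (0 : ℝ) < (2 * k + m).factorial := by positivity
  have hpow : (1 + x) ^ m ≤ 2 ^ m * (1 + x ^ m) := by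
    refine (add_pow_le zero_le_one hx.le m).trans ?_
    rw [one_pow]
    gcongr
    · norm_num
    · omega
  have hk : (1 : ℝ) ≤ ((k : ℝ) + 1) ^ m := one_le_pow₀ (by linarith [k.cast_nonneg (α := ℝ)])
  calc x ^ (2 * k) / ((2 * k).factorial : ℝ) * ((1 + x) / (k + 1)) ^ m
      ≤ x ^ (2 * k) / ((2 * k).factorial : ℝ) * (2 ^ m * (1 + x ^ m) / (k + 1) ^ m) := by
        rw [div_pow]; gcongr
    _ = 2 ^ m * (x ^ (2 * k) / ((2 * k).factorial : ℝ) / (k + 1) ^ m +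
          x ^ (2 * k + m) / ((2 * k).factorial * (k + 1) ^ m)) := by
        rw [pow_add]; field_simp
    _ ≤ _ := by
        gcongr 2 ^ m * (?_ + ?_)
        · exact div_le_self (by positivity) hk
        · rw [mul_div_assoc', div_le_div_iff₀ (by positivity) hB]
          calc _ ≤ x ^ (2 * k + m) * ((2 * k).factorial * ((m + 2) * (k + 1)) ^ m) := by gcongr
            _ = _ := by rw [mul_pow]; ring

theorem summable_cosh_coeff_mul_pow {x : ℝ} (hx : 0 < x) (m : ℕ) :
    Summable (fun k : ℕ => x ^ (2 * k) / ((2 * k).factorial : ℝ) * ((1 + x) / (k + 1)) ^ m) ∧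
    ∑' k : ℕ, x ^ (2 * k) / ((2 * k).factorial : ℝ) * ((1 + x) / (k + 1)) ^ m ≤
      2 ^ m * (1 + 2 * (m + 2) ^ m) * Real.cosh x := by
  have hinj : Function.Injective (fun k : ℕ => 2 * k + m) := fun a b h => by
    simp only at h; omega
  have hexp := Real.summable_pow_div_factorial x
  have hs : Summable (fun k : ℕ => x ^ (2 * k + m) / ((2 * k + m).factorial : ℝ)) :=
    hexp.comp_injective hinj
  have hle : ∑' k : ℕ, x ^ (2 * k + m) / ((2 * k + m).factorial : ℝ) ≤ 2 * Real.cosh x := by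
    have h := tsum_comp_le_tsum_of_inj hexp (fun _ => by positivity) hinj
    have he : ∑' n : ℕ, x ^ n / (n.factorial : ℝ) = Real.exp x := by
      rw [Real.exp_eq_exp_ℝ, NormedSpace.exp_eq_tsum_div]
    rw [he] at h
    refine h.trans ?_
    rw [Real.cosh_eq]
    linarith [Real.exp_pos (-x)]
  have hc := Real.hasSum_cosh x
  have hbig := (hc.summable.add (hs.mul_left (((m : ℝ) + 2) ^ m))).mul_left ((2 : ℝ) ^ m)
  have hsum : Summable
      (fun k : ℕ => x ^ (2 * k) / ((2 * k).factorial : ℝ) * ((1 + x) / (k + 1)) ^ m) :=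
    hbig.of_nonneg_of_le (fun _ => by positivity) (cosh_coeff_mul_le hx m)
  refine ⟨hsum, (hsum.tsum_le_tsum (cosh_coeff_mul_le hx m) hbig).trans ?_⟩
  rw [tsum_mul_left, (hc.summable).tsum_add (hs.mul_left _), tsum_mul_left, hc.tsum_eq]
  calc _ ≤ (2 : ℝ) ^ m * (Real.cosh x + (m + 2) ^ m * (2 * Real.cosh x)) := by gcongr
    _ = _ := by ring

theorem summable_cosh_coeff_mul_inv {x : ℝ} (hx : 0 < x) :
    Summable (fun k : ℕ => x ^ (2 * k) / ((2 * k).factorial : ℝ) * ((1 + x) / (k + 1))⁻¹) ∧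
    ∑' k : ℕ, x ^ (2 * k) / ((2 * k).factorial : ℝ) * ((1 + x) / (k + 1))⁻¹ ≤ Real.cosh x := by
  have h := ((Real.hasSum_cosh x).add (hasSum_two_mul_mul_cosh_coeff x)).mul_right (1 + x)⁻¹
  have hle : ∀ k : ℕ, x ^ (2 * k) / ((2 * k).factorial : ℝ) * ((1 + x) / (k + 1))⁻¹ ≤
      (x ^ (2 * k) / ((2 * k).factorial : ℝ) +
        x ^ (2 * k) / ((2 * k).factorial : ℝ) * (2 * k)) * (1 + x)⁻¹ := fun k => by
    have : x ^ (2 * k) / ((2 * k).factorial : ℝ) * ((1 + x) / (k + 1))⁻¹ =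
      x ^ (2 * k) / ((2 * k).factorial : ℝ) * (1 + k) * (1 + x)⁻¹ := by
      field_simp; ring
    rw [this]
    gcongr
    rw [mul_add, mul_one]
    gcongr
    linarith [k.cast_nonneg (α := ℝ)]
  have hsum := h.summable.of_nonneg_of_le (fun _ => by positivity) hle
  refine ⟨hsum, (hsum.tsum_le_tsum hle h.summable).trans ?_⟩
  rw [h.tsum_eq, ← div_eq_mul_inv, div_le_iff₀ (by positivity)]
  have : Real.sinh x ≤ Real.cosh x := (Real.sinh_lt_cosh x).le
  nlinarith

theorem rpow_le_add_of_le {y p q r : ℝ} (hy : 0 < y) (hp : p ≤ r) (hq : r ≤ q) :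
    y ^ r ≤ y ^ p + y ^ q := by
  rcases le_total 1 y with h | h
  · linarith [Real.rpow_le_rpow_of_exponent_le h hq, Real.rpow_nonneg hy.le p]
  · linarith [Real.rpow_le_rpow_of_exponent_ge hy h hp, Real.rpow_nonneg hy.le q]

theorem inv_rpow_abs_le_rpow {y M r : ℝ} (hM : 1 ≤ M) (h1 : M⁻¹ ≤ y) (h2 : y ≤ M) :
    (M ^ |r|)⁻¹ ≤ y ^ r := by
  have hM0 : 0 < M := by linarith
  have hy : 0 < y := (inv_pos.2 hM0).trans_le h1
  rcases le_total 0 r with h | h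
  · rw [abs_of_nonneg h, ← Real.inv_rpow hM0.le]
    gcongr
  · rw [abs_of_nonpos h, ← Real.rpow_neg hM0.le, neg_neg]
    exact Real.rpow_le_rpow_of_nonpos hy h2 h

theorem inv_rpow_abs_mul_one_sub_le_rpow {y M r : ℝ} (hM : 1 ≤ M) (hy : 0 < y) :
    (M ^ |r|)⁻¹ * (1 - (y + y⁻¹) / M) ≤ y ^ r := by
  have hM0 : 0 < M := by linarith
  have hp : 0 < (M ^ |r|)⁻¹ := by positivity
  by_cases h : M⁻¹ ≤ y ∧ y ≤ M
  · refine le_trans ?_ (inv_rpow_abs_le_rpow hM h.1 h.2)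
    have : 0 ≤ (y + y⁻¹) / M := by positivity
    nlinarith
  · have h1 : M ≤ y + y⁻¹ := by
      have := inv_pos.2 hy
      rcases not_and_or.1 h with h | h
      · have := (lt_inv_comm₀ hy hM0).1 (not_le.1 h)
        linarith
      · linarith
    have : 1 ≤ (y + y⁻¹) / M := (one_le_div hM0).2 h1
    have h0 : 0 < y ^ r := Real.rpow_pos_of_pos hy r
    nlinarith

theorem exists_cosh_coeff_rpow_bounds {ζ : ℝ} (hζ : -1 ≤ ζ) :
    ∃ c C : ℝ, 0 < c ∧ 0 < C ∧ ∀ x : ℝ, 0 < x →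
      Summable (fun k : ℕ => x ^ (2 * k) / ((2 * k).factorial : ℝ) * ((k : ℝ) + 1) ^ (-ζ)) ∧
      c * ((1 + x) ^ (-ζ) * Real.exp x) ≤
        ∑' k : ℕ, x ^ (2 * k) / ((2 * k).factorial : ℝ) * ((k : ℝ) + 1) ^ (-ζ) ∧
      ∑' k : ℕ, x ^ (2 * k) / ((2 * k).factorial : ℝ) * ((k : ℝ) + 1) ^ (-ζ) ≤
        C * ((1 + x) ^ (-ζ) * Real.exp x) := by
  obtain ⟨m, hm⟩ := exists_nat_ge ζ
  obtain ⟨A, hA⟩ : ∃ A : ℝ, A = 2 ^ m * (1 + 2 * ((m : ℝ) + 2) ^ m) := ⟨_, rfl⟩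
  have hA0 : 0 < A := by rw [hA]; positivity
  obtain ⟨M, hM⟩ : ∃ M : ℝ, M = 30 := ⟨_, rfl⟩
  have hM1 : 1 ≤ M := by rw [hM]; norm_num
  have hM0 : 0 < M := by linarith
  refine ⟨(M ^ |ζ|)⁻¹ / 4, 1 + A, by positivity, by positivity, fun x hx => ?_⟩
  have hx1 : 0 < 1 + x := by linarith
  have hy : ∀ k : ℕ, 0 < (1 + x) / ((k : ℝ) + 1) := fun k => by positivity
  have hfac : ∀ k : ℕ, x ^ (2 * k) / ((2 * k).factorial : ℝ) * ((k : ℝ) + 1) ^ (-ζ) =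
      (1 + x) ^ (-ζ) * (x ^ (2 * k) / ((2 * k).factorial : ℝ) * ((1 + x) / (k + 1)) ^ ζ) :=
    fun k => by
      have h1 : (1 + x) ^ (-ζ) * ((1 + x) / (k + 1)) ^ ζ = ((k : ℝ) + 1) ^ (-ζ) := by
        rw [Real.div_rpow hx1.le (by positivity), Real.rpow_neg hx1.le,
          Real.rpow_neg (by positivity)]
        have : (1 + x) ^ ζ ≠ 0 := by positivity
        field_simp
      rw [← h1]; ring
  obtain ⟨s1, b1⟩ := summable_cosh_coeff_mul_pow hx m
  obtain ⟨s2, b2⟩ := summable_cosh_coeff_mul_pow hx 1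
  obtain ⟨s3, b3⟩ := summable_cosh_coeff_mul_inv hx
  have hc := Real.hasSum_cosh x
  simp only [pow_one] at s2 b2
  have hup : ∀ k : ℕ, x ^ (2 * k) / ((2 * k).factorial : ℝ) * ((1 + x) / (k + 1)) ^ ζ ≤
      x ^ (2 * k) / ((2 * k).factorial : ℝ) * ((1 + x) / (k + 1))⁻¹ +
      x ^ (2 * k) / ((2 * k).factorial : ℝ) * ((1 + x) / (k + 1)) ^ m := fun k => by
    rw [← mul_add]
    gcongr
    simpa [Real.rpow_neg_one] using rpow_le_add_of_le (hy k) hζ hm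
  have hsum : Summable
      (fun k : ℕ => x ^ (2 * k) / ((2 * k).factorial : ℝ) * ((1 + x) / (k + 1)) ^ ζ) :=
    (s3.add s1).of_nonneg_of_le (fun _ => by positivity) hup
  have hlow : ∀ k : ℕ, (M ^ |ζ|)⁻¹ * (x ^ (2 * k) / ((2 * k).factorial : ℝ) -
      (x ^ (2 * k) / ((2 * k).factorial : ℝ) * ((1 + x) / (k + 1)) +
      x ^ (2 * k) / ((2 * k).factorial : ℝ) * ((1 + x) / (k + 1))⁻¹) / M) ≤
      x ^ (2 * k) / ((2 * k).factorial : ℝ) * ((1 + x) / (k + 1)) ^ ζ := fun k => by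
    calc _ = x ^ (2 * k) / ((2 * k).factorial : ℝ) * ((M ^ |ζ|)⁻¹ *
          (1 - ((1 + x) / (k + 1) + ((1 + x) / (k + 1))⁻¹) / M)) := by ring
      _ ≤ _ := by
        gcongr
        exact inv_rpow_abs_mul_one_sub_le_rpow hM1 (hy k)
  have hslow := (hc.summable.sub ((s2.add s3).div_const M)).mul_left (M ^ |ζ|)⁻¹
  have hcosh : Real.exp x / 2 ≤ Real.cosh x := by
    rw [Real.cosh_eq]; linarith [Real.exp_pos (-x)]
  have hcosh' : Real.cosh x ≤ Real.exp x := by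
    rw [Real.cosh_eq]; linarith [Real.exp_le_exp.2 (by linarith : -x ≤ x)]
  have hpos : 0 < (1 + x) ^ (-ζ) := by positivity
  simp_rw [hfac]
  rw [tsum_mul_left]
  refine ⟨hsum.mul_left _, ?_, ?_⟩
  · rw [mul_left_comm]
    gcongr
    refine le_trans ?_ (hslow.tsum_le_tsum hlow hsum)
    rw [tsum_mul_left, hc.summable.tsum_sub ((s2.add s3).div_const M), tsum_div_const,
      s2.tsum_add s3, hc.tsum_eq, div_mul_eq_mul_div, mul_div_assoc]
    gcongr
    rw [hM]
    norm_num at b2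
    linarith
  · rw [mul_left_comm]
    gcongr
    refine (hsum.tsum_le_tsum hup (s3.add s1)).trans ?_
    rw [s3.tsum_add s1]
    rw [← hA] at b1
    calc _ ≤ Real.cosh x + A * Real.cosh x := add_le_add b3 b1
      _ = (1 + A) * Real.cosh x := by ring
      _ ≤ _ := by gcongr

/-! ### Two-sided bounds for the Bessel heat kernel -/

theorem besselI_term_eq {ζ x : ℝ} (hζ : -1 / 2 < ζ) (hx : 0 < x) (k : ℕ) :
    (x / 2) ^ (2 * (k : ℝ) + (ζ - 1 / 2)) /
        ((Nat.factorial k : ℝ) * Real.Gamma ((k : ℝ) + (ζ - 1 / 2) + 1)) =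
      (x / 2) ^ (ζ - 1 / 2) / √π *
        ((Real.Gamma (k + (ζ + 1 / 2)) /
            (Real.Gamma (k + 1 / 2) * ((k : ℝ) + 1) ^ (ζ + 1 / 2 - 1 / 2)))⁻¹ *
          (x ^ (2 * k) / ((2 * k).factorial : ℝ) * ((k : ℝ) + 1) ^ (-ζ))) := by
  have hd := Real.Gamma_mul_Gamma_add_half ((k : ℝ) + 1 / 2)
  have e1 : (k : ℝ) + 1 / 2 + 1 / 2 = k + 1 := by ring
  have e2 : 2 * ((k : ℝ) + 1 / 2) = ((2 * k : ℕ) : ℝ) + 1 := by push_cast; ring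
  have e3 : 1 - (((2 * k : ℕ) : ℝ) + 1) = -((2 * k : ℕ) : ℝ) := by ring
  rw [e1, e2, e3, Real.Gamma_nat_eq_factorial, Real.Gamma_nat_eq_factorial,
    Real.rpow_neg (by norm_num), Real.rpow_natCast] at hd
  have e4 : (k : ℝ) + (ζ - 1 / 2) + 1 = k + (ζ + 1 / 2) := by ring
  have e5 : 2 * (k : ℝ) + (ζ - 1 / 2) = (ζ - 1 / 2) + ((2 * k : ℕ) : ℝ) := by push_cast; ring
  have hG : 0 < Real.Gamma (k + (ζ + 1 / 2)) :=
    Real.Gamma_pos_of_pos (by linarith [k.cast_nonneg (α := ℝ)])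
  have hH : 0 < Real.Gamma ((k : ℝ) + 1 / 2) := Real.Gamma_pos_of_pos (by positivity)
  have hπ : 0 < √π := Real.sqrt_pos.2 Real.pi_pos
  have hf : (0 : ℝ) < k.factorial := by positivity
  have hf2 : (0 : ℝ) < (2 * k).factorial := by positivity
  have hk : 0 < ((k : ℝ) + 1) ^ ζ := by positivity
  rw [e4, e5, Real.rpow_add (by positivity), Real.rpow_natCast, add_sub_cancel_right,
    Real.rpow_neg (by positivity), div_pow]
  have hd' : √π = Real.Gamma ((k : ℝ) + 1 / 2) * k.factorial * 2 ^ (2 * k) /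
      (2 * k).factorial := by
    rw [hd]
    field_simp
  rw [hd']
  field_simp

theorem exists_besselI_bounds {ζ : ℝ} (hζ : -1 / 2 < ζ) :
    ∃ c C : ℝ, 0 < c ∧ 0 < C ∧ ∀ x : ℝ, 0 < x →
      c * ((x / 2) ^ (ζ - 1 / 2) * ((1 + x) ^ (-ζ) * Real.exp x)) ≤ besselI (ζ - 1 / 2) x ∧
      besselI (ζ - 1 / 2) x ≤
        C * ((x / 2) ^ (ζ - 1 / 2) * ((1 + x) ^ (-ζ) * Real.exp x)) := by
  obtain ⟨c, C, hc, hC, hρ⟩ := exists_Gamma_quotient_bounds (s := ζ + 1 / 2) (by linarith)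
  obtain ⟨c', C', hc', hC', hS⟩ := exists_cosh_coeff_rpow_bounds (ζ := ζ) (by linarith)
  have hπ : 0 < √π := Real.sqrt_pos.2 Real.pi_pos
  refine ⟨C⁻¹ * c' / √π, c⁻¹ * C' / √π, by positivity, by positivity, fun x hx => ?_⟩
  obtain ⟨hs, hl, hu⟩ := hS x hx
  have hup : ∀ k : ℕ, (Real.Gamma (k + (ζ + 1 / 2)) /
            (Real.Gamma (k + 1 / 2) * ((k : ℝ) + 1) ^ (ζ + 1 / 2 - 1 / 2)))⁻¹ *
          (x ^ (2 * k) / ((2 * k).factorial : ℝ) * ((k : ℝ) + 1) ^ (-ζ)) ≤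
          c⁻¹ * (x ^ (2 * k) / ((2 * k).factorial : ℝ) * ((k : ℝ) + 1) ^ (-ζ)) := fun k => by
    gcongr
    exact (hρ k).1
  have hlo : ∀ k : ℕ, C⁻¹ * (x ^ (2 * k) / ((2 * k).factorial : ℝ) * ((k : ℝ) + 1) ^ (-ζ)) ≤
      (Real.Gamma (k + (ζ + 1 / 2)) /
            (Real.Gamma (k + 1 / 2) * ((k : ℝ) + 1) ^ (ζ + 1 / 2 - 1 / 2)))⁻¹ *
          (x ^ (2 * k) / ((2 * k).factorial : ℝ) * ((k : ℝ) + 1) ^ (-ζ)) := fun k => by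
    gcongr
    · exact hc.trans_le (hρ k).1
    · exact (hρ k).2
  have hsum := (hs.mul_left c⁻¹).of_nonneg_of_le
    (fun k => le_trans (by positivity) (hlo k)) hup
  have hx2 : 0 < (x / 2) ^ (ζ - 1 / 2) := by positivity
  unfold besselI
  simp_rw [besselI_term_eq hζ hx]
  rw [tsum_mul_left]
  constructor
  · calc _ = (x / 2) ^ (ζ - 1 / 2) / √π * (C⁻¹ * (c' * ((1 + x) ^ (-ζ) * Real.exp x))) := by ring
      _ ≤ _ := by
        gcongr
        refine le_trans ?_ ((hs.mul_left C⁻¹).tsum_le_tsum hlo hsum)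
        rw [tsum_mul_left]
        gcongr
  · calc _ ≤ (x / 2) ^ (ζ - 1 / 2) / √π * (c⁻¹ * (C' * ((1 + x) ^ (-ζ) * Real.exp x))) := by
          gcongr
          refine (hsum.tsum_le_tsum hup (hs.mul_left c⁻¹)).trans ?_
          rw [tsum_mul_left]
          gcongr
      _ = _ := by ring

theorem heat_profile_eq {ζ t r s : ℝ} (ht : 0 < t) (hr : 0 < r) (hs : 0 < s) :
    (r * s) ^ ((1 : ℝ) / 2 - ζ) / (2 * t) * Real.exp (-(r ^ 2 + s ^ 2) / (4 * t)) *
      ((r * s / (2 * t) / 2) ^ (ζ - 1 / 2) *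
        ((1 + r * s / (2 * t)) ^ (-ζ) * Real.exp (r * s / (2 * t)))) =
    2 ^ (-ζ) * (t ^ (-(1 / 2) : ℝ) * (r * s + 2 * t) ^ (-ζ) *
      Real.exp (-(r - s) ^ 2 / (4 * t))) := by
  have ha : 0 < r * s := mul_pos hr hs
  have hexp : Real.exp (-(r - s) ^ 2 / (4 * t)) =
      Real.exp (-(r ^ 2 + s ^ 2) / (4 * t)) * Real.exp (r * s / (2 * t)) := by
    rw [← Real.exp_add]
    congr 1
    field_simp
    ring
  have e1 : 1 + r * s / (2 * t) = (r * s + 2 * t) / (2 * t) := by field_simp; ring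
  have e2 : r * s / (2 * t) / 2 = r * s / (2 * (2 * t)) := by field_simp
  have e3 : (2 * t) ^ (-(1 / 2) : ℝ) * 2 ^ (1 / 2 - ζ) = 2 ^ (-ζ) * t ^ (-(1 / 2) : ℝ) := by
    rw [Real.mul_rpow two_pos.le ht.le, mul_right_comm, ← Real.rpow_add two_pos]
    congr 2
    ring
  have e4 : (2 * t) ^ (-(1 / 2) : ℝ) = (2 * t) ^ (1 / 2 - ζ) * (2 * t) ^ ζ / (2 * t) := by
    rw [← Real.rpow_add (by positivity), ← Real.rpow_sub_one (by positivity)]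
    congr 1
    ring
  have e5 : (1 : ℝ) / 2 - ζ = -(ζ - 1 / 2) := by ring
  rw [hexp, e1, e2, Real.div_rpow ha.le (by positivity), Real.div_rpow (by positivity)
    (by positivity), ← mul_assoc, ← mul_assoc (2 ^ (-ζ)), ← mul_assoc (2 ^ (-ζ)), ← e3, e4,
    Real.mul_rpow two_pos.le (by positivity), e5, Real.rpow_neg ha.le, Real.rpow_neg two_pos.le,
    Real.rpow_neg (by positivity : 0 ≤ 2 * t), Real.rpow_neg (by positivity : 0 ≤ 2 * t)]
  field_simp

theorem exists_besselHeat_bounds {ζ : ℝ} (hζ : -1 / 2 < ζ) :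
    ∃ c C : ℝ, 0 < c ∧ 0 < C ∧ ∀ t r s : ℝ, 0 < t → 0 < r → 0 < s →
      c * (t ^ (-(1 / 2) : ℝ) * (r * s + 2 * t) ^ (-ζ) * Real.exp (-(r - s) ^ 2 / (4 * t))) ≤
        besselHeat ζ t r s ∧
      besselHeat ζ t r s ≤
        C * (t ^ (-(1 / 2) : ℝ) * (r * s + 2 * t) ^ (-ζ) *
          Real.exp (-(r - s) ^ 2 / (4 * t))) := by
  obtain ⟨c, C, hc, hC, h⟩ := exists_besselI_bounds hζ
  refine ⟨c * 2 ^ (-ζ), C * 2 ^ (-ζ), by positivity, by positivity, fun t r s ht hr hs => ?_⟩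
  obtain ⟨h1, h2⟩ := h (r * s / (2 * t)) (by positivity)
  rw [mul_assoc c, mul_assoc C, ← heat_profile_eq ht hr hs, mul_left_comm, mul_left_comm C]
  unfold besselHeat
  have : 0 ≤ (r * s) ^ ((1 : ℝ) / 2 - ζ) / (2 * t) *
    Real.exp (-(r ^ 2 + s ^ 2) / (4 * t)) := by positivity
  exact ⟨mul_le_mul_of_nonneg_left h1 this, mul_le_mul_of_nonneg_left h2 this⟩

theorem measurable_besselHeat (ζ r s : ℝ) : Measurable fun t => besselHeat ζ t r s := by
  have h : Measurable (besselI (ζ - 1 / 2)) := by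
    unfold besselI
    exact Measurable.tsum fun k => by fun_prop
  unfold besselHeat
  have h2 : Measurable fun t : ℝ => r * s / (2 * t) := by fun_prop
  exact Measurable.mul (by fun_prop) (h.comp h2)

/-! ### Stable densities through their Laplace transform -/

/-- `w` is a nonnegative density on `(0, ∞)` with Laplace transform `exp (-l ^ β)`. -/
def IsStableDensity (β : ℝ) (w : ℝ → ℝ) : Prop :=
  (∀ τ, 0 < τ → 0 ≤ w τ) ∧ Measurable w ∧
    ∀ l : ℝ, 0 ≤ l → (∫ τ in Ioi (0 : ℝ), Real.exp (-τ * l) * w τ) = Real.exp (-l ^ β)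

namespace IsStableDensity

variable {β : ℝ} {w : ℝ → ℝ}

theorem integrableOn_exp_mul (hw : IsStableDensity β w) {l : ℝ} (hl : 0 ≤ l) :
    IntegrableOn (fun τ => Real.exp (-τ * l) * w τ) (Ioi 0) :=
  Integrable.of_integral_ne_zero (by rw [hw.2.2 l hl]; exact (Real.exp_pos _).ne')

theorem integrableOn (hw : IsStableDensity β w) : IntegrableOn w (Ioi 0) := by
  simpa using hw.integrableOn_exp_mul le_rfl

theorem integral_eq_one (hw : IsStableDensity β w) (hβ : 0 < β) :
    ∫ τ in Ioi (0 : ℝ), w τ = 1 := by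
  simpa [Real.zero_rpow hβ.ne'] using hw.2.2 0 le_rfl

theorem integrableOn_one_sub_exp_mul (hw : IsStableDensity β w) {D : ℝ} (hD : 0 < D) :
    IntegrableOn (fun τ => (1 - Real.exp (-τ * D⁻¹)) * w τ) (Ioi 0) := by
  simp_rw [sub_mul, one_mul]
  exact hw.integrableOn.sub (hw.integrableOn_exp_mul (inv_pos.2 hD).le)

theorem integral_one_sub_exp_mul (hw : IsStableDensity β w) (hβ : 0 < β) {D : ℝ} (hD : 0 < D) :
    ∫ τ in Ioi (0 : ℝ), (1 - Real.exp (-τ * D⁻¹)) * w τ = 1 - Real.exp (-D ^ (-β)) := by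
  simp_rw [sub_mul, one_mul]
  rw [integral_sub hw.integrableOn (hw.integrableOn_exp_mul (inv_pos.2 hD).le),
    hw.integral_eq_one hβ, hw.2.2 _ (inv_pos.2 hD).le, Real.inv_rpow hD.le, Real.rpow_neg hD.le]

theorem integrableOn_inv_pow_mul (hw : IsStableDensity β w) (hβ : 0 < β) (n : ℕ) :
    IntegrableOn (fun τ => τ⁻¹ ^ n * w τ) (Ioi 0) := by
  rcases Nat.eq_zero_or_pos n with rfl | hn
  · simpa using hw.integrableOn
  have hn' : (0 : ℝ) < n := by exact_mod_cast hn
  have hmeas : Measurable fun p : ℝ × ℝ =>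
      p.1 ^ ((n : ℝ) - 1) * (Real.exp (-p.2 * p.1) * w p.2) := by
    have := hw.2.1
    fun_prop
  have hint : Integrable (fun p : ℝ × ℝ => p.1 ^ ((n : ℝ) - 1) * (Real.exp (-p.2 * p.1) * w p.2))
      ((volume.restrict (Ioi (0 : ℝ))).prod (volume.restrict (Ioi (0 : ℝ)))) := by
    rw [integrable_prod_iff hmeas.aestronglyMeasurable]
    constructor
    · filter_upwards [ae_restrict_mem measurableSet_Ioi] with l hl
      exact (hw.integrableOn_exp_mul (le_of_lt hl)).const_mul _
    · have hI : IntegrableOn (fun l : ℝ => l ^ ((n : ℝ) - 1) * Real.exp (-l ^ β)) (Ioi 0) := by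
        refine Integrable.of_integral_ne_zero ?_
        rw [integral_rpow_mul_exp_neg_rpow hβ (by linarith)]
        have : 0 < Real.Gamma (((n : ℝ) - 1 + 1) / β) :=
          Real.Gamma_pos_of_pos (by rw [sub_add_cancel]; positivity)
        positivity
      refine hI.congr_fun (fun l hl => ?_) measurableSet_Ioi
      have hl0 : 0 < l := hl
      dsimp only
      rw [← hw.2.2 l hl0.le, ← integral_const_mul]
      refine setIntegral_congr_fun measurableSet_Ioi fun τ hτ => ?_
      have := hw.1 τ hτ
      exact (Real.norm_of_nonneg (by positivity)).symm
  have h := hint.integral_prod_right.mul_const (Real.Gamma n)⁻¹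
  refine IntegrableOn.congr_fun h (fun τ hτ => ?_) measurableSet_Ioi
  have hτ0 : 0 < τ := hτ
  have hG : Real.Gamma n ≠ 0 := (Real.Gamma_pos_of_pos hn').ne'
  have e := Real.integral_rpow_mul_exp_neg_mul_Ioi hn' hτ0
  have e2 : ∀ l : ℝ, l ^ ((n : ℝ) - 1) * (Real.exp (-τ * l) * w τ) =
      l ^ ((n : ℝ) - 1) * Real.exp (-(τ * l)) * w τ := fun l => by
    rw [neg_mul, mul_assoc]
  simp only [e2]
  rw [integral_mul_const, e, Real.rpow_natCast, one_div]
  field_simp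

end IsStableDensity

theorem exists_pow_mul_exp_le (n : ℕ) : ∃ C : ℝ, 0 < C ∧ ∀ u : ℝ, 0 < u →
    (2 + u⁻¹) ^ n * Real.exp (-(u⁻¹ / 4)) ≤ C * (1 - Real.exp (-u)) := by
  refine ⟨4 ^ (n + 1) * (n + 1).factorial * Real.exp (1 / 2), by positivity, fun u hu => ?_⟩
  have hv := inv_pos.2 hu
  have h1 := Real.pow_div_factorial_le_exp ((2 + u⁻¹) / 4) (by positivity) (n + 1)
  rw [div_pow, div_div, div_le_iff₀ (by positivity)] at h1
  have h2 : (2 + u⁻¹)⁻¹ ≤ 1 - Real.exp (-u) := by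
    have h3 := Real.add_one_le_exp u
    have h4 : Real.exp (-u) ≤ (u + 1)⁻¹ := by
      rw [Real.exp_neg]
      gcongr
    have h5 : (2 + u⁻¹)⁻¹ ≤ 1 - (u + 1)⁻¹ := by
      rw [inv_eq_one_div, div_le_iff₀ (by positivity)]
      field_simp
      nlinarith
    linarith
  refine le_trans ?_ (mul_le_mul_of_nonneg_left h2 (by positivity))
  rw [← div_eq_mul_inv, le_div_iff₀ (by positivity)]
  have h6 : (2 + u⁻¹) / 4 = 1 / 2 + u⁻¹ / 4 := by ring
  rw [h6, Real.exp_add] at h1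
  calc (2 + u⁻¹) ^ n * Real.exp (-(u⁻¹ / 4)) * (2 + u⁻¹)
      = (2 + u⁻¹) ^ (n + 1) * Real.exp (-(u⁻¹ / 4)) := by ring
    _ ≤ Real.exp (1 / 2) * Real.exp (u⁻¹ / 4) * (4 ^ (n + 1) * (n + 1).factorial) *
          Real.exp (-(u⁻¹ / 4)) := by gcongr
    _ = 4 ^ (n + 1) * (n + 1).factorial * Real.exp (1 / 2) *
          (Real.exp (u⁻¹ / 4) * Real.exp (-(u⁻¹ / 4))) := by ring
    _ = _ := by rw [← Real.exp_add, add_neg_cancel, Real.exp_zero, mul_one]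

theorem IsStableDensity.exists_dominating {β : ℝ} {w : ℝ → ℝ} (hw : IsStableDensity β w)
    (hβ : 0 < β) (n : ℕ) : ∃ C : ℝ, 0 < C ∧ ∀ d D : ℝ, D = max d 1 → ∃ Φ : ℝ → ℝ,
      IntegrableOn Φ (Ioi 0) ∧ (∫ τ in Ioi (0 : ℝ), Φ τ) ≤ C * D ^ (-β) ∧
      (0 ≤ d → ∀ τ, 0 < τ → (2 + D / τ) ^ n * Real.exp (-d / (4 * τ)) * w τ ≤ Φ τ) := by
  obtain ⟨C, hC, hCb⟩ := exists_pow_mul_exp_le n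
  have hI : IntegrableOn (fun τ => (2 + τ⁻¹) ^ n * w τ) (Ioi 0) := by
    have hw' := hw.2.1
    refine Integrable.mono' (g := fun τ => 2 ^ (n - 1) * (2 ^ n * w τ + τ⁻¹ ^ n * w τ))
      (((hw.integrableOn.const_mul _).add (hw.integrableOn_inv_pow_mul hβ n)).const_mul _)
      (by fun_prop) ?_
    filter_upwards [ae_restrict_mem measurableSet_Ioi] with τ hτ
    have hτ0 : 0 < τ := hτ
    have := hw.1 τ hτ
    have hτi := inv_pos.2 hτ0
    rw [Real.norm_of_nonneg (by positivity)]
    calc _ ≤ (2 ^ (n - 1) * (2 ^ n + τ⁻¹ ^ n)) * w τ := by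
          gcongr; exact add_pow_le zero_le_two hτi.le n
      _ = _ := by ring
  refine ⟨C + |∫ τ in Ioi (0 : ℝ), (2 + τ⁻¹) ^ n * w τ|, by positivity, fun d D hD => ?_⟩
  rcases le_total 1 d with h | h
  · have hD' : D = d := by rw [hD, max_eq_left h]
    subst hD'
    have hD0 : 0 < D := by linarith
    refine ⟨fun τ => C * ((1 - Real.exp (-τ * D⁻¹)) * w τ),
      (hw.integrableOn_one_sub_exp_mul hD0).const_mul C, ?_, fun _ τ hτ => ?_⟩
    · rw [integral_const_mul, hw.integral_one_sub_exp_mul hβ hD0]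
      have h1 : 1 - Real.exp (-D ^ (-β)) ≤ D ^ (-β) := by
        linarith [Real.add_one_le_exp (-D ^ (-β))]
      have h2 : 0 < D ^ (-β) := by positivity
      calc _ ≤ C * D ^ (-β) := by gcongr
        _ ≤ _ := by
          gcongr
          linarith [abs_nonneg (∫ τ in Ioi (0 : ℝ), (2 + τ⁻¹) ^ n * w τ)]
    · have h1 := hCb (τ / D) (by positivity)
      have h2 := hw.1 τ hτ
      rw [inv_div] at h1
      dsimp only
      rw [← mul_assoc]
      refine mul_le_mul_of_nonneg_right ?_ h2
      rwa [show -D / (4 * τ) = -(D / τ / 4) by field_simp,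
        show -τ * D⁻¹ = -(τ / D) by ring]
  · have hD' : D = 1 := by rw [hD, max_eq_right h]
    subst hD'
    refine ⟨_, hI, ?_, fun hd τ hτ => ?_⟩
    · rw [Real.one_rpow, mul_one]
      linarith [le_abs_self (∫ τ in Ioi (0 : ℝ), (2 + τ⁻¹) ^ n * w τ)]
    · have h2 := hw.1 τ hτ
      rw [one_div]
      have h3 : Real.exp (-d / (4 * τ)) ≤ 1 := Real.exp_le_one_iff.2
        (div_nonpos_of_nonpos_of_nonneg (by linarith) (by positivity))
      have h4 : 0 ≤ (2 + τ⁻¹) ^ n := by positivity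
      exact mul_le_mul_of_nonneg_right (mul_le_of_le_one_right h4 h3) h2

/-- A combination of tail functionals that is supported, up to sign, on `[δ, K]`. -/
noncomputable def tailBump (δ K u : ℝ) : ℝ :=
  (1 - Real.exp (-u)) - 2 * δ * (1 - Real.exp (-u / δ)) - 2 * (1 - Real.exp (-u / K))

theorem tailBump_le_one {δ K u : ℝ} (hδ : 0 < δ) (hK : 0 < K) (hu : 0 < u) :
    tailBump δ K u ≤ 1 := by
  have h1 : Real.exp (-u / δ) ≤ 1 := Real.exp_le_one_iff.2
    (div_nonpos_of_nonpos_of_nonneg (by linarith) hδ.le)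
  have h2 : Real.exp (-u / K) ≤ 1 := Real.exp_le_one_iff.2
    (div_nonpos_of_nonpos_of_nonneg (by linarith) hK.le)
  have h3 := Real.exp_pos (-u)
  unfold tailBump
  nlinarith

theorem half_le_one_sub_exp_neg {x : ℝ} (h0 : 0 ≤ x) (h1 : x ≤ 1) :
    x / 2 ≤ 1 - Real.exp (-x) := by
  have h2 := Real.add_one_le_exp x
  have h3 : Real.exp (-x) ≤ (x + 1)⁻¹ := by
    rw [Real.exp_neg]
    gcongr
  have h4 : (x + 1)⁻¹ ≤ 1 - x / 2 := by
    rw [inv_eq_one_div, div_le_iff₀ (by positivity)]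
    nlinarith
  linarith

theorem tailBump_nonpos {δ K u : ℝ} (hδ : 0 < δ) (hK : 0 < K) (hu : 0 < u)
    (h : ¬ (δ ≤ u ∧ u ≤ K)) : tailBump δ K u ≤ 0 := by
  have h1 : Real.exp (-u / δ) ≤ 1 := Real.exp_le_one_iff.2
    (div_nonpos_of_nonpos_of_nonneg (by linarith) hδ.le)
  have h2 : Real.exp (-u / K) ≤ 1 := Real.exp_le_one_iff.2
    (div_nonpos_of_nonpos_of_nonneg (by linarith) hK.le)
  have h3 := Real.exp_pos (-u)
  have h4 := Real.add_one_le_exp (-u)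
  unfold tailBump
  rcases not_and_or.1 h with h | h
  · have h5 := half_le_one_sub_exp_neg (x := u / δ) (by positivity)
      ((div_le_one hδ).2 (not_le.1 h).le)
    rw [neg_div]
    have h6 : δ * (u / δ / 2) ≤ δ * (1 - Real.exp (-(u / δ))) := by gcongr
    have h7 : δ * (u / δ / 2) = u / 2 := by field_simp
    linarith
  · have h5 := half_le_one_sub_exp_neg (x := 1) zero_le_one le_rfl
    have h6 : Real.exp (-u / K) ≤ Real.exp (-1) := by
      rw [Real.exp_le_exp, div_le_iff₀ hK]
      linarith [not_le.1 h]
    nlinarith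

theorem IsStableDensity.exists_tailBump_lower {β : ℝ} (hβ : 0 < β) (hβ1 : β < 1) :
    ∃ δ K : ℝ, 0 < δ ∧ 0 < K ∧ ∀ w : ℝ → ℝ, IsStableDensity β w → ∀ D : ℝ, 1 ≤ D →
      IntegrableOn (fun τ => tailBump δ K (τ / D) * w τ) (Ioi 0) ∧
      D ^ (-β) / 4 ≤ ∫ τ in Ioi (0 : ℝ), tailBump δ K (τ / D) * w τ := by
  obtain ⟨δ, hδ⟩ : ∃ δ : ℝ, δ = (1 / 16) ^ (1 / (1 - β)) := ⟨_, rfl⟩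
  obtain ⟨K, hK⟩ : ∃ K : ℝ, K = 16 ^ (1 / β) := ⟨_, rfl⟩
  have hδ0 : 0 < δ := by rw [hδ]; positivity
  have hK0 : 0 < K := by rw [hK]; positivity
  have hβ1' : 1 - β ≠ 0 := by linarith
  have hδp : δ * δ ^ (-β) = 1 / 16 := by
    rw [← Real.rpow_one_add' hδ0.le (by linarith), hδ, ← Real.rpow_mul (by norm_num),
      ← sub_eq_add_neg, one_div_mul_cancel hβ1', Real.rpow_one]
  have hKp : K ^ (-β) = 1 / 16 := by
    rw [Real.rpow_neg hK0.le, hK, ← Real.rpow_mul (by norm_num), one_div_mul_cancel hβ.ne',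
      Real.rpow_one]
    norm_num
  refine ⟨δ, K, hδ0, hK0, fun w hw D hD => ?_⟩
  have hD0 : 0 < D := by linarith
  have i1 := hw.integrableOn_one_sub_exp_mul hD0
  have i2 := (hw.integrableOn_one_sub_exp_mul (mul_pos hδ0 hD0)).const_mul (2 * δ)
  have i3 := (hw.integrableOn_one_sub_exp_mul (mul_pos hK0 hD0)).const_mul 2
  have e : (fun τ => tailBump δ K (τ / D) * w τ) = fun τ =>
      (1 - Real.exp (-τ * D⁻¹)) * w τ - 2 * δ * ((1 - Real.exp (-τ * (δ * D)⁻¹)) * w τ) -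
        2 * ((1 - Real.exp (-τ * (K * D)⁻¹)) * w τ) := by
    funext τ
    have e1 : -(τ / D) = -τ * D⁻¹ := by ring
    have e2 : ∀ y : ℝ, -τ * D⁻¹ / y = -τ * (y * D)⁻¹ := fun y => by rw [mul_inv]; ring
    rw [tailBump, e1, e2, e2]
    ring
  rw [e]
  have i12 : IntegrableOn (fun τ => (1 - Real.exp (-τ * D⁻¹)) * w τ -
      2 * δ * ((1 - Real.exp (-τ * (δ * D)⁻¹)) * w τ)) (Ioi 0) := i1.sub i2
  refine ⟨i12.sub i3, ?_⟩
  rw [integral_sub i12 i3, integral_sub i1 i2, integral_const_mul, integral_const_mul,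
    hw.integral_one_sub_exp_mul hβ hD0, hw.integral_one_sub_exp_mul hβ (mul_pos hδ0 hD0),
    hw.integral_one_sub_exp_mul hβ (mul_pos hK0 hD0), Real.mul_rpow hδ0.le hD0.le,
    Real.mul_rpow hK0.le hD0.le, hKp]
  have hx : 0 < D ^ (-β) := by positivity
  have hx1 : D ^ (-β) ≤ 1 := Real.rpow_le_one_of_one_le_of_nonpos hD (by linarith)
  have b1 := half_le_one_sub_exp_neg hx.le hx1
  have b2 := Real.add_one_le_exp (-(δ ^ (-β) * D ^ (-β)))
  have b3 := Real.add_one_le_exp (-(1 / 16 * D ^ (-β)))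
  have b4 : δ * (1 - Real.exp (-(δ ^ (-β) * D ^ (-β)))) ≤ 1 / 16 * D ^ (-β) := by
    rw [← hδp, mul_assoc]
    gcongr
    linarith
  linarith

/-! ### Two-sided bounds for the subordinated kernel -/

theorem rpow_profile_eq {ζ a τ D : ℝ} (ha : 0 < a) (hτ : 0 < τ) (hD : 0 < D) :
    τ ^ (-(1 / 2) : ℝ) * (a + 2 * τ) ^ (-ζ) = D ^ (-(1 / 2) : ℝ) * (a + D) ^ (-ζ) *
      ((D / τ) ^ (1 / 2 : ℝ) * ((a + D) / (a + 2 * τ)) ^ ζ) := by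
  rw [Real.div_rpow hD.le hτ.le, Real.div_rpow (by positivity) (by positivity),
    Real.rpow_neg hD.le, Real.rpow_neg hτ.le, Real.rpow_neg (by positivity),
    Real.rpow_neg (by positivity)]
  have h1 : D ^ (1 / 2 : ℝ) ≠ 0 := by positivity
  have h2 : τ ^ (1 / 2 : ℝ) ≠ 0 := by positivity
  have h3 : (a + D) ^ ζ ≠ 0 := by positivity
  have h4 : (a + 2 * τ) ^ ζ ≠ 0 := by positivity
  field_simp

theorem profile_le {ζ a τ D : ℝ} {m : ℕ} (hζ : -1 / 2 < ζ) (hm : ζ ≤ m) (ha : 0 < a)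
    (hτ : 0 < τ) (hD : 0 < D) :
    τ ^ (-(1 / 2) : ℝ) * (a + 2 * τ) ^ (-ζ) ≤
      D ^ (-(1 / 2) : ℝ) * (a + D) ^ (-ζ) * (2 * (2 + D / τ) ^ (m + 1)) := by
  rw [rpow_profile_eq ha hτ hD]
  obtain ⟨v, hv⟩ : ∃ v, v = D / τ := ⟨_, rfl⟩
  obtain ⟨z, hz⟩ : ∃ z, z = (a + D) / (a + 2 * τ) := ⟨_, rfl⟩
  rw [← hv, ← hz]
  have hv0 : 0 < v := by rw [hv]; positivity
  have hz0 : 0 < z := by rw [hz]; positivity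
  have hDv : D = v * τ := by rw [hv]; field_simp
  have hzv : z ≤ 2 + v := by
    rw [hz, div_le_iff₀ (by positivity), hDv]
    nlinarith [mul_pos hv0 hτ, mul_pos hv0 ha]
  have hvz : v / z ≤ 2 + v := by
    rw [div_le_iff₀ hz0, hz, mul_div_assoc', le_div_iff₀ (by positivity), hDv]
    nlinarith [mul_pos hv0 hτ, mul_pos hv0 (mul_pos hv0 hτ)]
  have h1 : z ^ ζ ≤ z ^ (-(1 / 2) : ℝ) + z ^ m := by
    have := rpow_le_add_of_le hz0 (p := -(1 / 2)) (by linarith) hm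
    rwa [Real.rpow_natCast] at this
  have hone : 1 ≤ 2 + v := by linarith
  have h2 : v ^ (1 / 2 : ℝ) * z ^ (-(1 / 2) : ℝ) ≤ (2 + v) ^ (m + 1) := by
    rw [Real.rpow_neg hz0.le, ← div_eq_mul_inv, ← Real.div_rpow hv0.le hz0.le]
    calc (v / z) ^ (1 / 2 : ℝ) ≤ (2 + v) ^ (1 / 2 : ℝ) := by gcongr
      _ ≤ (2 + v) ^ ((m + 1 : ℕ) : ℝ) := by
        apply Real.rpow_le_rpow_of_exponent_le hone
        push_cast
        linarith [m.cast_nonneg (α := ℝ)]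
      _ = _ := Real.rpow_natCast _ _
  have h3 : v ^ (1 / 2 : ℝ) ≤ 2 + v := by
    calc v ^ (1 / 2 : ℝ) ≤ (2 + v) ^ (1 / 2 : ℝ) := by gcongr; linarith
      _ ≤ (2 + v) ^ (1 : ℝ) := Real.rpow_le_rpow_of_exponent_le hone (by norm_num)
      _ = _ := Real.rpow_one _
  have h4 : v ^ (1 / 2 : ℝ) * z ^ m ≤ (2 + v) ^ (m + 1) := by
    rw [pow_succ']
    gcongr
  refine mul_le_mul_of_nonneg_left ?_ (by positivity)
  calc v ^ (1 / 2 : ℝ) * z ^ ζ ≤ v ^ (1 / 2 : ℝ) * (z ^ (-(1 / 2) : ℝ) + z ^ m) := by gcongr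
    _ ≤ 2 * (2 + v) ^ (m + 1) := by rw [mul_add]; linarith

theorem le_profile {ζ a τ D M : ℝ} (ha : 0 < a) (hτ : 0 < τ) (hD : 0 < D)
    (h1 : 1 + 2 * (τ / D) ≤ M) (h2 : 1 + D / τ ≤ M) :
    D ^ (-(1 / 2) : ℝ) * (a + D) ^ (-ζ) * ((M ^ |(1 / 2 : ℝ)|)⁻¹ * (M ^ |ζ|)⁻¹) ≤
      τ ^ (-(1 / 2) : ℝ) * (a + 2 * τ) ^ (-ζ) := by
  have hp1 : 0 < τ / D := by positivity
  have hp2 : 0 < D / τ := by positivity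
  have hM : 1 ≤ M := by linarith
  have hM0 : 0 < M := by linarith
  have h1' : D + 2 * τ ≤ M * D := by
    have := mul_le_mul_of_nonneg_right h1 hD.le
    rwa [add_mul, one_mul, mul_assoc, div_mul_cancel₀ _ hD.ne'] at this
  have h2' : τ + D ≤ M * τ := by
    have := mul_le_mul_of_nonneg_right h2 hτ.le
    rwa [add_mul, one_mul, div_mul_cancel₀ _ hτ.ne'] at this
  rw [rpow_profile_eq ha hτ hD]
  gcongr
  · apply inv_rpow_abs_le_rpow hM
    · rw [inv_le_comm₀ hM0 hp2, inv_div]; linarith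
    · linarith
  · apply inv_rpow_abs_le_rpow hM
    · rw [inv_le_comm₀ hM0 (by positivity), inv_div, div_le_iff₀ (by positivity)]
      nlinarith
    · rw [div_le_iff₀ (by positivity)]
      nlinarith

theorem exists_tailBump_le_profile (ζ : ℝ) {δ K : ℝ} (hδ : 0 < δ) (hK : 0 < K) :
    ∃ c : ℝ, 0 < c ∧ ∀ a τ d D : ℝ, 0 < a → 0 < τ → 0 < D → d ≤ D →
      D ^ (-(1 / 2) : ℝ) * (a + D) ^ (-ζ) * (c * tailBump δ K (τ / D)) ≤
        τ ^ (-(1 / 2) : ℝ) * (a + 2 * τ) ^ (-ζ) * Real.exp (-d / (4 * τ)) := by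
  obtain ⟨M, hM⟩ : ∃ M : ℝ, M = 1 + 2 * K + δ⁻¹ := ⟨_, rfl⟩
  have hδi := inv_pos.2 hδ
  have hM0 : 0 < M := by rw [hM]; positivity
  refine ⟨(M ^ |(1 / 2 : ℝ)|)⁻¹ * (M ^ |ζ|)⁻¹ * Real.exp (-M), by positivity,
    fun a τ d D ha hτ hD hdD => ?_⟩
  have hu : 0 < τ / D := by positivity
  by_cases h : δ ≤ τ / D ∧ τ / D ≤ K
  · have h2 : D / τ ≤ δ⁻¹ := by rw [← inv_div]; gcongr; exact h.1
    have hp := le_profile (ζ := ζ) ha hτ hD (M := M) (by linarith [h.2]) (by linarith)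
    have he : Real.exp (-M) ≤ Real.exp (-d / (4 * τ)) := by
      rw [Real.exp_le_exp, neg_div, neg_le_neg_iff, div_le_iff₀ (by positivity)]
      rw [div_le_iff₀ hτ] at h2
      have : δ⁻¹ * τ ≤ M * τ := by gcongr; linarith
      nlinarith [mul_pos hM0 hτ]
    have hb := tailBump_le_one hδ hK hu
    calc _ ≤ D ^ (-(1 / 2) : ℝ) * (a + D) ^ (-ζ) *
          ((M ^ |(1 / 2 : ℝ)|)⁻¹ * (M ^ |ζ|)⁻¹ * Real.exp (-M) * 1) := by gcongr
      _ = D ^ (-(1 / 2) : ℝ) * (a + D) ^ (-ζ) *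
          ((M ^ |(1 / 2 : ℝ)|)⁻¹ * (M ^ |ζ|)⁻¹) * Real.exp (-M) := by ring
      _ ≤ _ := by gcongr
  · refine le_trans ?_ (by positivity :
      0 ≤ τ ^ (-(1 / 2) : ℝ) * (a + 2 * τ) ^ (-ζ) * Real.exp (-d / (4 * τ)))
    exact mul_nonpos_of_nonneg_of_nonpos (by positivity)
      (mul_nonpos_of_nonneg_of_nonpos (by positivity) (tailBump_nonpos hδ hK hu h))

theorem exists_integral_besselHeat_bounds {ζ β : ℝ} (hζ : -1 / 2 < ζ) (hβ : 0 < β) (hβ1 : β < 1)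
    {w : ℝ → ℝ} (hw : IsStableDensity β w) :
    ∃ c C : ℝ, 0 < c ∧ 0 < C ∧ ∀ r s D : ℝ, 0 < r → 0 < s → D = max ((r - s) ^ 2) 1 →
      c * (D ^ (-(1 / 2) - β) * (r * s + D) ^ (-ζ)) ≤
        ∫ τ in Ioi (0 : ℝ), besselHeat ζ τ r s * w τ ∧
      ∫ τ in Ioi (0 : ℝ), besselHeat ζ τ r s * w τ ≤
        C * (D ^ (-(1 / 2) - β) * (r * s + D) ^ (-ζ)) := by
  obtain ⟨m, hm⟩ := exists_nat_ge ζ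
  obtain ⟨c₁, C₁, hc₁, hC₁, hheat⟩ := exists_besselHeat_bounds hζ
  obtain ⟨C₂, hC₂, hdom⟩ := hw.exists_dominating hβ (m + 1)
  obtain ⟨δ, K, hδ, hK, hbump⟩ := IsStableDensity.exists_tailBump_lower hβ hβ1
  obtain ⟨c₃, hc₃, hlow⟩ := exists_tailBump_le_profile ζ hδ hK
  refine ⟨c₁ * c₃ / 4, 2 * C₁ * C₂, by positivity, by positivity, fun r s D hr hs hD => ?_⟩
  have ha : 0 < r * s := mul_pos hr hs
  have hD1 : 1 ≤ D := hD ▸ le_max_right _ _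
  have hD0 : 0 < D := by linarith
  have hdD : (r - s) ^ 2 ≤ D := hD ▸ le_max_left _ _
  obtain ⟨P, hP⟩ : ∃ P : ℝ, P = D ^ (-(1 / 2) : ℝ) * (r * s + D) ^ (-ζ) := ⟨_, rfl⟩
  have hP0 : 0 < P := by rw [hP]; positivity
  have hF : D ^ (-(1 / 2) - β) * (r * s + D) ^ (-ζ) = P * D ^ (-β) := by
    rw [sub_eq_add_neg, Real.rpow_add hD0, hP]; ring
  rw [hF]
  obtain ⟨Φ, hΦ, hΦle, hΦdom⟩ := hdom ((r - s) ^ 2) D hD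
  have hup : ∀ τ ∈ Ioi (0 : ℝ), besselHeat ζ τ r s * w τ ≤ 2 * C₁ * P * Φ τ := fun τ hτ => by
    have hτ0 : 0 < τ := hτ
    have hw0 := hw.1 τ hτ
    have h1 := profile_le hζ hm ha hτ0 hD0
    rw [← hP] at h1
    calc besselHeat ζ τ r s * w τ
        ≤ C₁ * (τ ^ (-(1 / 2) : ℝ) * (r * s + 2 * τ) ^ (-ζ) *
            Real.exp (-(r - s) ^ 2 / (4 * τ))) * w τ := by
          gcongr; exact (hheat τ r s hτ0 hr hs).2
      _ ≤ C₁ * (P * (2 * (2 + D / τ) ^ (m + 1)) *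
            Real.exp (-(r - s) ^ 2 / (4 * τ))) * w τ := by gcongr
      _ = 2 * C₁ * P * ((2 + D / τ) ^ (m + 1) *
            Real.exp (-(r - s) ^ 2 / (4 * τ)) * w τ) := by ring
      _ ≤ _ := by gcongr; exact hΦdom (sq_nonneg _) τ hτ0
  have hnn : ∀ τ ∈ Ioi (0 : ℝ), 0 ≤ besselHeat ζ τ r s * w τ := fun τ hτ => by
    have hτ0 : 0 < τ := hτ
    refine mul_nonneg (le_trans ?_ (hheat τ r s hτ0 hr hs).1) (hw.1 τ hτ)
    positivity
  have hint : IntegrableOn (fun τ => besselHeat ζ τ r s * w τ) (Ioi 0) := by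
    refine Integrable.mono' (hΦ.const_mul (2 * C₁ * P))
      ((measurable_besselHeat ζ r s).mul hw.2.1).aestronglyMeasurable ?_
    filter_upwards [ae_restrict_mem measurableSet_Ioi] with τ hτ
    rw [Real.norm_of_nonneg (hnn τ hτ)]
    exact hup τ hτ
  obtain ⟨hbi, hble⟩ := hbump w hw D hD1
  constructor
  · calc c₁ * c₃ / 4 * (P * D ^ (-β)) = c₁ * c₃ * P * (D ^ (-β) / 4) := by ring
      _ ≤ c₁ * c₃ * P * ∫ τ in Ioi (0 : ℝ), tailBump δ K (τ / D) * w τ := by gcongr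
      _ = ∫ τ in Ioi (0 : ℝ), c₁ * c₃ * P * (tailBump δ K (τ / D) * w τ) :=
        (integral_const_mul _ _).symm
      _ ≤ _ := by
        refine setIntegral_mono_on (hbi.const_mul _) hint measurableSet_Ioi fun τ hτ => ?_
        have hτ0 : 0 < τ := hτ
        have hw0 := hw.1 τ hτ
        have h1 := hlow (r * s) τ ((r - s) ^ 2) D ha hτ0 hD0 hdD
        rw [← hP] at h1
        calc c₁ * c₃ * P * (tailBump δ K (τ / D) * w τ)
            = c₁ * (P * (c₃ * tailBump δ K (τ / D))) * w τ := by ring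
          _ ≤ c₁ * (τ ^ (-(1 / 2) : ℝ) * (r * s + 2 * τ) ^ (-ζ) *
                Real.exp (-(r - s) ^ 2 / (4 * τ))) * w τ := by gcongr
          _ ≤ _ := by gcongr; exact (hheat τ r s hτ0 hr hs).1
  · calc _ ≤ ∫ τ in Ioi (0 : ℝ), 2 * C₁ * P * Φ τ :=
          setIntegral_mono_on hint (hΦ.const_mul _) measurableSet_Ioi hup
      _ = 2 * C₁ * P * ∫ τ in Ioi (0 : ℝ), Φ τ := integral_const_mul _ _
      _ ≤ 2 * C₁ * P * (C₂ * D ^ (-β)) := by gcongr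
      _ = _ := by ring

theorem rpow_neg_bounds_of_le_two_mul (ζ : ℝ) {X Y : ℝ} (hX : 0 < X) (h1 : X ≤ Y)
    (h2 : Y ≤ 2 * X) :
    (2 ^ |ζ|)⁻¹ * X ^ (-ζ) ≤ Y ^ (-ζ) ∧ Y ^ (-ζ) ≤ 2 ^ |ζ| * X ^ (-ζ) := by
  have hY : 0 < Y := hX.trans_le h1
  have b1 : (2 : ℝ)⁻¹ ≤ Y / X := by rw [le_div_iff₀ hX]; linarith
  have b2 : Y / X ≤ 2 := by rwa [div_le_iff₀ hX]
  have e1 := inv_rpow_abs_le_rpow (r := -ζ) one_le_two b1 b2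
  have e2 := inv_rpow_abs_le_rpow (r := ζ) one_le_two b1 b2
  have hXp : 0 < X ^ (-ζ) := by positivity
  have hY' : Y ^ (-ζ) = (Y / X) ^ (-ζ) * X ^ (-ζ) := by
    rw [Real.div_rpow hY.le hX.le, div_mul_cancel₀ _ hXp.ne']
  rw [abs_neg] at e1
  rw [hY']
  constructor
  · gcongr
  · gcongr
    rw [Real.rpow_neg (by positivity)]
    exact inv_le_of_inv_le₀ (by positivity) e2

theorem sq_rpow_eq_abs_rpow (x p : ℝ) : (x ^ 2) ^ p = |x| ^ (2 * p) := by
  rw [← sq_abs, ← Real.rpow_natCast, ← Real.rpow_mul (abs_nonneg x)]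
  norm_num

theorem stmt4 (ζ α : ℝ) (hζ : -1/2 < ζ) (hα0 : 0 < α) (hα2 : α < 2)
    (σ : ℝ → ℝ → ℝ) (hσ : IsStableSubordinatorDensity α σ) :
    ∃ c C : ℝ, 0 < c ∧ 0 < C ∧
      ∀ r s : ℝ, 0 < r → 0 < s →
        (r * s < 1 → (r - s) ^ 2 < 1 →
          c ≤ subKernel ζ σ 1 r s ∧ subKernel ζ σ 1 r s ≤ C) ∧
        ((r - s) ^ 2 < 1 → 1 < r * s →
          c * (r * s) ^ (-ζ) ≤ subKernel ζ σ 1 r s ∧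
            subKernel ζ σ 1 r s ≤ C * (r * s) ^ (-ζ)) ∧
        (r * s < 1 → 1 < (r - s) ^ 2 →
          c * |r - s| ^ (-(2 * ζ + 1 + α)) ≤ subKernel ζ σ 1 r s ∧
            subKernel ζ σ 1 r s ≤ C * |r - s| ^ (-(2 * ζ + 1 + α))) ∧
        (1 < r * s → 1 < (r - s) ^ 2 → r * s < (r - s) ^ 2 →
          c * |r - s| ^ (-(2 * ζ + 1 + α)) ≤ subKernel ζ σ 1 r s ∧
            subKernel ζ σ 1 r s ≤ C * |r - s| ^ (-(2 * ζ + 1 + α))) ∧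
        (1 < r * s → 1 < (r - s) ^ 2 → (r - s) ^ 2 < r * s →
          c * (r * s) ^ (-ζ) * |r - s| ^ (-(1 + α)) ≤ subKernel ζ σ 1 r s ∧
            subKernel ζ σ 1 r s ≤ C * (r * s) ^ (-ζ) * |r - s| ^ (-(1 + α))) := by
  have hw : IsStableDensity (α / 2) (σ 1) := by
    refine ⟨hσ.1 1 one_pos, hσ.2.1 1 one_pos, fun l hl => ?_⟩
    rw [hσ.2.2 1 l one_pos hl, neg_one_mul]
  obtain ⟨c, C, hc, hC, h⟩ :=
    exists_integral_besselHeat_bounds hζ (by linarith) (by linarith) hw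
  refine ⟨c * (2 ^ |ζ|)⁻¹, C * 2 ^ |ζ|, by positivity, by positivity, fun r s hr hs => ?_⟩
  have ha : 0 < r * s := mul_pos hr hs
  -- It suffices to compare `r * s + D`, up to a factor `2`, with the dominating scale `X`.
  have key : ∀ D X : ℝ, D = max ((r - s) ^ 2) 1 → 0 < X → X ≤ r * s + D → r * s + D ≤ 2 * X →
      c * (2 ^ |ζ|)⁻¹ * (D ^ (-(1 / 2) - α / 2) * X ^ (-ζ)) ≤ subKernel ζ σ 1 r s ∧
      subKernel ζ σ 1 r s ≤ C * 2 ^ |ζ| * (D ^ (-(1 / 2) - α / 2) * X ^ (-ζ)) := by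
    intro D X hD hX h1 h2
    obtain ⟨l, u⟩ := h r s D hr hs hD
    obtain ⟨l', u'⟩ := rpow_neg_bounds_of_le_two_mul ζ hX h1 h2
    have hD0 : 0 < D := hD ▸ lt_max_of_lt_right one_pos
    unfold subKernel
    constructor
    · calc _ = c * (D ^ (-(1 / 2) - α / 2) * ((2 ^ |ζ|)⁻¹ * X ^ (-ζ))) := by ring
        _ ≤ c * (D ^ (-(1 / 2) - α / 2) * (r * s + D) ^ (-ζ)) := by gcongr
        _ ≤ _ := l
    · calc _ ≤ C * (D ^ (-(1 / 2) - α / 2) * (r * s + D) ^ (-ζ)) := u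
        _ ≤ C * (D ^ (-(1 / 2) - α / 2) * (2 ^ |ζ| * X ^ (-ζ))) := by gcongr
        _ = _ := by ring
  have near : (r - s) ^ 2 < 1 → (1 : ℝ) = max ((r - s) ^ 2) 1 := fun h' => (max_eq_right h'.le).symm
  have far : 1 < (r - s) ^ 2 → (r - s) ^ 2 = max ((r - s) ^ 2) 1 := fun h' =>
    (max_eq_left h'.le).symm
  have hpow : ((r - s) ^ 2) ^ (-(1 / 2) - α / 2) = |r - s| ^ (-(1 + α)) := by
    rw [sq_rpow_eq_abs_rpow]; congr 1; ring
  have hpow' : 1 < (r - s) ^ 2 → ((r - s) ^ 2) ^ (-(1 / 2) - α / 2) * ((r - s) ^ 2) ^ (-ζ) =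
      |r - s| ^ (-(2 * ζ + 1 + α)) := fun h' => by
    rw [← Real.rpow_add (by linarith), sq_rpow_eq_abs_rpow]; congr 1; ring
  refine ⟨fun h1 h2 => ?_, fun h1 h2 => ?_, fun h1 h2 => ?_, fun h1 h2 h3 => ?_,
    fun h1 h2 h3 => ?_⟩
  · simpa using key 1 1 (near h2) one_pos (by linarith) (by linarith)
  · simpa using key 1 (r * s) (near h1) ha (by linarith) (by linarith)
  · rw [← hpow' h2]
    exact key _ _ (far h2) (by linarith) (by linarith) (by linarith)
  · rw [← hpow' h2]
    exact key _ _ (far h2) (by linarith) (by linarith) (by linarith)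
  · rw [mul_assoc, mul_assoc _ _ (|r - s| ^ (-(1 + α))), ← hpow, mul_comm ((r * s) ^ (-ζ))]
    exact key _ (r * s) (far h2) ha (by linarith) (by linarith)
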